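/- arXiv:1301.7116 — 2 statements merged into one kernel-verified Lean document; each statement's English description precedes it below -/
import Mathlib

section
/- Let F be a field and let S_n act on the rational function field F(x_1, ..., x_n) by permuting variables. If a rational function f in x_1, ..., x_n is invariant under every permutation of the variables that fixes x_1, then f lies in the subfield F(σ_1, ..., σ_n, x_1) generated by the elementary symmetric polynomials σ_1, ..., σ_n together with x_1; i.e., f is expressible as a rational function of σ_1, ..., σ_n and x_1. -/
open MvPolynomial

/-- The action of a permutation of the variables on the field of rational functions
`F(x₁, …, xₙ)`, realized as the fraction field of the polynomial ring. -/
noncomputable def permAct (F : Type*) [Field F] (n : ℕ) (σ : Equiv.Perm (Fin n)) :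
    FractionRing (MvPolynomial (Fin n) F) ≃+* FractionRing (MvPolynomial (Fin n) F) :=
  IsFractionRing.ringEquivOfRingEquiv (MvPolynomial.renameEquiv F σ).toRingEquiv

/-! Let `K` be an intermediate field of `F(x₁, …, xₙ) / F` containing the elementary symmetric
polynomials. Then `∏ (T - xᵢ)` has coefficients in `K`, is separable, and its roots generate
`F(x₁, …, xₙ)`, so `F(x₁, …, xₙ) / K` is Galois. Every element of its Galois group permutes the
roots, hence acts by a permutation of the variables fixing `K` pointwise. A rational function
invariant under all such permutations thus lies in `K` (Lagrange's theorem); Galois' lemma is the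
case `K = F(σ₁, …, σₙ, x₁)`. -/

open scoped Polynomial

theorem exists_perm_apply_eq_of_mapsTo_range {ι α : Type*} [Finite ι] {x : ι → α} {g : α → α}
    (hx : Function.Injective x) (hg : Function.Injective g)
    (hmaps : Set.MapsTo g (Set.range x) (Set.range x)) :
    ∃ σ : Equiv.Perm ι, ∀ i, g (x i) = x (σ i) := by
  choose s hs using fun i => hmaps (Set.mem_range_self i)
  have hs_inj : Function.Injective s :=
    .of_comp (f := x) (by simpa only [Function.comp_def, hs] using hg.comp hx)
  exact ⟨.ofBijective s (Finite.injective_iff_bijective.mp hs_inj), fun i => (hs i).symm⟩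

theorem prod_X_sub_C_mem_lifts_of_esymm_mem_range {R S : Type*} [CommRing R] [CommRing S]
    (φ : R →+* S) (s : Multiset S) (hs : ∀ k ≤ s.card, s.esymm k ∈ φ.range) :
    (s.map fun a => Polynomial.X - Polynomial.C a).prod ∈ Polynomial.lifts φ := by
  rw [Multiset.prod_X_sub_X_eq_sum_esymm]
  refine sum_mem fun k hk => ?_
  have hneg_one : (-1 : S[X]) ∈ Polynomial.lifts φ := ⟨-1, by simp⟩
  have hcoeff : Polynomial.C (s.esymm k) ∈ Polynomial.lifts φ :=
    Polynomial.C'_mem_lifts (hs k (Finset.mem_range_succ_iff.mp hk))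
  exact mul_mem (pow_mem hneg_one k) (mul_mem hcoeff (Polynomial.X_pow_mem_lifts φ _))

section RootsInExtension

variable {ι A B : Type*} [Fintype ι] [CommRing A] [CommRing B] [IsDomain B] [Algebra A B]
  {x : ι → B} {q : A[X]}

theorem rootSet_eq_range_of_map_eq_prod_X_sub_C
    (hq : q.map (algebraMap A B) = ∏ i, (Polynomial.X - Polynomial.C (x i))) :
    q.rootSet B = Set.range x := by
  classical
  have hroots : q.aroots B = Finset.univ.val.map x := by
    rw [Polynomial.aroots_def, hq,
      ← Polynomial.roots_multiset_prod_X_sub_C (Finset.univ.val.map x), Multiset.map_map]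
    rfl
  ext y
  simp [Polynomial.rootSet, hroots]

theorem exists_perm_algEquiv_apply_eq_of_map_eq_prod_X_sub_C (hx : Function.Injective x)
    (hq : q.map (algebraMap A B) = ∏ i, (Polynomial.X - Polynomial.C (x i))) (g : B ≃ₐ[A] B) :
    ∃ σ : Equiv.Perm ι, ∀ i, g (x i) = x (σ i) := by
  refine exists_perm_apply_eq_of_mapsTo_range hx g.injective ?_
  rw [← rootSet_eq_range_of_map_eq_prod_X_sub_C hq]
  exact Polynomial.rootSet_maps_to' id g.toAlgHom

theorem isGalois_of_map_eq_prod_X_sub_C {K L : Type*} [Field K] [Field L] [Algebra K L] {x : ι → L}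
    {q : K[X]} (hx : Function.Injective x)
    (hq : q.map (algebraMap K L) = ∏ i, (Polynomial.X - Polynomial.C (x i)))
    (htop : IntermediateField.adjoin K (Set.range x) = ⊤) : IsGalois K L := by
  have hsep : q.Separable := by
    rwa [← Polynomial.separable_map (algebraMap K L), hq, Polynomial.separable_prod_X_sub_C_iff]
  have hsplits : (q.map (algebraMap K L)).Splits :=
    hq ▸ .prod fun i _ => .X_sub_C (x i)
  have : q.IsSplittingField K L := isSplittingField_iff_intermediateField.mpr
    ⟨hsplits, by rw [rootSet_eq_range_of_map_eq_prod_X_sub_C hq, htop]⟩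
  exact .of_separable_splitting_field hsep

end RootsInExtension

section FractionRing

variable {ι R A : Type*} [CommRing R] [CommRing A] [Algebra (MvPolynomial ι R) A]

theorem algebraMap_X_injective [Nontrivial R] [IsFractionRing (MvPolynomial ι R) A] :
    Function.Injective fun i => algebraMap (MvPolynomial ι R) A (X i) :=
  (IsFractionRing.injective (MvPolynomial ι R) A).comp X_injective

variable [Algebra R A] [IsScalarTower R (MvPolynomial ι R) A]

theorem aeval_algebraMap_X (p : MvPolynomial ι R) :
    aeval (fun i => algebraMap (MvPolynomial ι R) A (X i)) p = algebraMap _ A p :=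
  (aeval_algebraMap_apply A X p).trans (by rw [aeval_X_left_apply])

variable [IsFractionRing (MvPolynomial ι R) A]

theorem algHom_ext_algebraMap_X {B : Type*} [Semiring B] [Algebra R B] {g h : A →ₐ[R] B}
    (hX : ∀ i, g (algebraMap (MvPolynomial ι R) A (X i)) =
      h (algebraMap (MvPolynomial ι R) A (X i))) : g = h :=
  IsLocalization.algHom_ext (nonZeroDivisors (MvPolynomial ι R)) (MvPolynomial.algHom_ext hX)

variable (R A) in
/-- The action of a permutation of the variables on a fraction ring `A` of `MvPolynomial ι R`, as an
automorphism over the coefficient ring. For `ι = Fin n`, `R` a field and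
`A = FractionRing (MvPolynomial ι R)`, its underlying map is that of `permAct R n σ`. -/
noncomputable def permuteVariables (σ : Equiv.Perm ι) : A ≃ₐ[R] A :=
  IsFractionRing.algEquivOfAlgEquiv (renameEquiv R σ)

theorem permuteVariables_algebraMap_X (σ : Equiv.Perm ι) (i : ι) :
    permuteVariables R A σ (algebraMap (MvPolynomial ι R) A (X i)) =
      algebraMap (MvPolynomial ι R) A (X (σ i)) := by
  simp [permuteVariables]

theorem permuteVariables_algebraMap_X_eq_self_iff [Nontrivial R] {σ : Equiv.Perm ι} {i : ι} :
    permuteVariables R A σ (algebraMap (MvPolynomial ι R) A (X i)) =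
      algebraMap (MvPolynomial ι R) A (X i) ↔ σ i = i := by
  rw [permuteVariables_algebraMap_X]
  exact algebraMap_X_injective.eq_iff

end FractionRing

section RationalFunctions

variable {ι F L : Type*} [Field F] [Field L] [Algebra F L] [Algebra (MvPolynomial ι F) L]
  [IsScalarTower F (MvPolynomial ι F) L]

theorem adjoin_range_algebraMap_X [IsFractionRing (MvPolynomial ι F) L] :
    IntermediateField.adjoin F (Set.range fun i => algebraMap (MvPolynomial ι F) L (X i)) = ⊤ := by
  refine eq_top_iff.mpr fun f _ => (IntermediateField.mem_adjoin_range_iff F _ f).mpr ?_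
  obtain ⟨p, q, -, rfl⟩ := IsFractionRing.div_surjective (A := MvPolynomial ι F) f
  exact ⟨p, q, by simp only [aeval_algebraMap_X]⟩

variable [Fintype ι] {K : IntermediateField F L}

theorem exists_map_eq_prod_X_sub_C_algebraMap_X
    (hK : ∀ k < Fintype.card ι, algebraMap _ L (esymm ι F (k + 1)) ∈ K) :
    ∃ q : K[X], q.map (algebraMap K L) =
      ∏ i, (Polynomial.X - Polynomial.C (algebraMap (MvPolynomial ι F) L (X i))) := by
  have hesymm (k : ℕ) (hk : k ≤ Fintype.card ι) : algebraMap _ L (esymm ι F k) ∈ K := by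
    cases k with
    | zero => simp
    | succ k => exact hK k hk
  have hlifts := prod_X_sub_C_mem_lifts_of_esymm_mem_range (algebraMap K L)
    (Finset.univ.val.map fun i => algebraMap (MvPolynomial ι F) L (X i)) fun k hk => by
      rw [← aeval_esymm_eq_multiset_esymm ι F, aeval_algebraMap_X]
      exact ⟨⟨_, hesymm k (by simpa using hk)⟩, rfl⟩
  rw [Multiset.map_map] at hlifts
  exact (Polynomial.mem_lifts _).mp hlifts

theorem stmt_12_general [IsFractionRing (MvPolynomial ι F) L]
    (hK : ∀ k < Fintype.card ι, algebraMap _ L (esymm ι F (k + 1)) ∈ K) {f : L}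
    (hf : ∀ σ : Equiv.Perm ι, (∀ y ∈ K, permuteVariables F L σ y = y) →
      permuteVariables F L σ f = f) : f ∈ K := by
  obtain ⟨q, hq⟩ := exists_map_eq_prod_X_sub_C_algebraMap_X hK
  have : IsGalois K L := isGalois_of_map_eq_prod_X_sub_C algebraMap_X_injective hq <|
    IntermediateField.adjoin_eq_top_of_adjoin_eq_top F adjoin_range_algebraMap_X
  suffices hfixed : ∀ g : L ≃ₐ[K] L, g f = f by
    obtain ⟨y, rfl⟩ := (InfiniteGalois.mem_range_algebraMap_iff_fixed f).mpr hfixed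
    exact y.2
  intro g
  obtain ⟨σ, hσ⟩ :=
    exists_perm_algEquiv_apply_eq_of_map_eq_prod_X_sub_C algebraMap_X_injective hq g
  have hg : (g.restrictScalars F : L →ₐ[F] L) = permuteVariables F L σ :=
    algHom_ext_algebraMap_X fun i => (hσ i).trans (permuteVariables_algebraMap_X σ i).symm
  have hg_apply (y : L) : permuteVariables F L σ y = g y := (DFunLike.congr_fun hg y).symm
  rw [← hg_apply]
  exact hf σ fun y hy => (hg_apply y).trans (g.commutes ⟨y, hy⟩)

end RationalFunctions

/-- A rational function invariant under every permutation of the variables fixing `x₁`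
is a rational function of the elementary symmetric polynomials and `x₁`. -/
theorem stmt_12 (F : Type*) [Field F] (n : ℕ) (hn : 0 < n)
    (f : FractionRing (MvPolynomial (Fin n) F))
    (hf : ∀ σ : Equiv.Perm (Fin n), σ ⟨0, hn⟩ = ⟨0, hn⟩ → permAct F n σ f = f) :
    f ∈ IntermediateField.adjoin F
      ((Set.range fun k : Fin n =>
          algebraMap (MvPolynomial (Fin n) F) (FractionRing (MvPolynomial (Fin n) F))
            (esymm (Fin n) F ((k : ℕ) + 1))) ∪
        {algebraMap (MvPolynomial (Fin n) F) (FractionRing (MvPolynomial (Fin n) F))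
          (X ⟨0, hn⟩)}) :=
  stmt_12_general
    (fun k hk => IntermediateField.subset_adjoin _ _ (.inl ⟨⟨k, by simpa using hk⟩, rfl⟩))
    fun σ hσ => hf σ <| permuteVariables_algebraMap_X_eq_self_iff.mp <|
      hσ _ (IntermediateField.subset_adjoin _ _ (.inr rfl))
end

section
/- Let F be a field and let S_n act on the rational function field F(x_1, ..., x_n) by permuting variables. If V is a rational function of x_1, ..., x_n that is not left fixed by any nontrivial permutation of the variables (i.e., its stabilizer in S_n is trivial), then every rational function of x_1, ..., x_n is expressible as a rational function of the elementary symmetric polynomials σ_1, ..., σ_n and V; i.e., F(x_1, ..., x_n) = F(σ_1, ..., σ_n, V). -/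
open MvPolynomial

/-!
A rational function fixed by all permutations of the variables is a quotient of symmetric
polynomials, so the fixed field of `Sₙ` is `F(σ₁, …, σₙ)`. By Artin's theorem `F(x₁, …, xₙ)` is
Galois over it with group `Sₙ`. The Galois correspondence then identifies `F(σ₁, …, σₙ, V)` with the
fixed field of the stabilizer of `V`, which is everything when that stabilizer is trivial.
-/

section FixedField

variable {G B L : Type*} [Group G] [Finite G] [Field L] [MulSemiringAction G L]

theorem exists_fixed_div_eq_of_fixed [CommRing B] [Algebra B L] [IsFractionRing B L]
    [MulSemiringAction G B] [SMulDistribClass G B L] {z : L} (hz : ∀ g : G, g • z = z) :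
    ∃ a b : B, (∀ g : G, g • a = a) ∧ (∀ g : G, g • b = b) ∧
      algebraMap B L a / algebraMap B L b = z := by
  let A := FixedPoints.subring B G
  have : FaithfulSMul A L := (faithfulSMul_iff_algebraMap_injective A L).2 <|
    (IsFractionRing.injective B L).comp Subtype.val_injective
  have : IsDomain A := IsDomain.of_faithfulSMul A L
  let := FractionRing.liftAlgebra A L
  have : Algebra.IsInvariant A B G := ⟨fun b hb => ⟨⟨b, hb⟩, rfl⟩⟩
  have := IsFractionRing.isInvariant G A B (FractionRing A) L
  obtain ⟨q, rfl⟩ := Algebra.IsInvariant.isInvariant (A := FractionRing A) z hz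
  obtain ⟨a, b, -, rfl⟩ := IsFractionRing.div_surjective (A := A) q
  refine ⟨a, b, a.2, b.2, ?_⟩
  rw [map_div₀, ← IsScalarTower.algebraMap_apply, ← IsScalarTower.algebraMap_apply]
  rfl

variable {F : Type*} [Field F] [Algebra F L] [SMulCommClass G F L]

theorem fixedPoints_eq_adjoin_image_of_isFractionRing [CommRing B] [Algebra F B] [Algebra B L]
    [IsScalarTower F B L] [IsFractionRing B L] [MulSemiringAction G B] [SMulCommClass G F B]
    [SMulDistribClass G B L] {S : Set B}
    (hS : FixedPoints.subalgebra F B G = Algebra.adjoin F S) :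
    FixedPoints.intermediateField G = IntermediateField.adjoin F (algebraMap B L '' S) := by
  let K := IntermediateField.adjoin F (algebraMap B L '' S)
  apply le_antisymm
  · have hmem : FixedPoints.subalgebra F B G ≤
        K.toSubalgebra.comap (IsScalarTower.toAlgHom F B L) :=
      hS.trans_le <| Algebra.adjoin_le fun b hb =>
        IntermediateField.subset_adjoin F _ (Set.mem_image_of_mem _ hb)
    intro z hz
    obtain ⟨a, b, ha, hb, rfl⟩ := exists_fixed_div_eq_of_fixed (B := B) hz
    exact div_mem (hmem ha) (hmem hb)
  · rw [IntermediateField.adjoin_le_iff]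
    rintro _ ⟨b, hb, rfl⟩ g
    have hb_fixed : b ∈ FixedPoints.subalgebra F B G := hS ▸ Algebra.subset_adjoin hb
    rw [← algebraMap.coe_smul', hb_fixed g]

theorem fixedPoints_fixingSubgroup_eq_sup_adjoin [FaithfulSMul G L] (T : Set L) :
    FixedPoints.intermediateField (F := F) (fixingSubgroup G T) =
      FixedPoints.intermediateField G ⊔ IntermediateField.adjoin F T := by
  let K : IntermediateField F L := FixedPoints.intermediateField G
  have : IsGaloisGroup G K L := IsGaloisGroup.fixedPoints G L
  have hfix : fixingSubgroup G (IntermediateField.adjoin K T : Set L) = fixingSubgroup G T := by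
    ext g
    simp only [mem_fixingSubgroup_iff]
    exact IntermediateField.forall_mem_adjoin_smul_eq_self_iff K g
  rw [← IntermediateField.restrictScalars_adjoin_eq_sup,
    ← IsGaloisGroup.fixedPoints_fixingSubgroup G K L (IntermediateField.adjoin K T), hfix]
  rfl

end FixedField

/-- The action of the permutations of the variables on polynomials, by renaming. It is not a global
instance because a permutation action on `R` would induce a different, coefficientwise action. -/
noncomputable abbrev permMulSemiringAction (ι R : Type*) [CommSemiring R] :
    MulSemiringAction (Equiv.Perm ι) (MvPolynomial ι R) where
  smul σ p := rename σ p
  one_smul := rename_id_apply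
  mul_smul σ τ p := (rename_rename τ σ p).symm
  smul_zero σ := map_zero (rename σ)
  smul_add σ := map_add (rename σ)
  smul_one σ := map_one (rename σ)
  smul_mul σ := map_mul (rename σ)

section Symmetric

attribute [local instance] permMulSemiringAction

variable {ι R : Type*}

instance smulCommClass_perm [CommSemiring R] :
    SMulCommClass (Equiv.Perm ι) R (MvPolynomial ι R) where
  smul_comm σ := map_smul (rename σ)

instance faithfulSMul_perm [CommSemiring R] [Nontrivial R] :
    FaithfulSMul (Equiv.Perm ι) (MvPolynomial ι R) where
  eq_of_smul_eq_smul {σ τ} h := Equiv.ext fun i => X_injective (R := R) <| by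
    rw [← rename_X σ i, ← rename_X τ i]
    exact h (X i)

theorem fixedPoints_perm_eq_adjoin_esymm [CommRing R] [Fintype ι] {n : ℕ}
    (hn : Fintype.card ι ≤ n) :
    FixedPoints.subalgebra R (MvPolynomial ι R) (Equiv.Perm ι) =
      Algebra.adjoin R (Set.range fun k : Fin n => esymm ι R (k + 1)) := by
  rw [Algebra.adjoin_range_eq_range_aeval]
  ext p
  constructor
  · intro hp
    obtain ⟨q, hq⟩ := esymmAlgHom_surjective R hn ⟨p, hp⟩
    exact ⟨q, (esymmAlgHom_apply q).symm.trans (congrArg Subtype.val hq)⟩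
  · rintro ⟨q, rfl⟩
    exact esymmAlgHom_apply (σ := ι) q ▸ (esymmAlgHom ι R n q).2

/-- Lagrange's theorem on rational functions, with a set `T` in place of a single function `V`. -/
theorem stmt_13_general {F L : Type*} [Fintype ι] [Field F] [Field L] [Algebra F L]
    [Algebra (MvPolynomial ι F) L] [IsScalarTower F (MvPolynomial ι F) L]
    [IsFractionRing (MvPolynomial ι F) L] [MulSemiringAction (Equiv.Perm ι) L]
    [SMulDistribClass (Equiv.Perm ι) (MvPolynomial ι F) L]
    {n : ℕ} (hn : Fintype.card ι ≤ n) (T : Set L) (W : L) :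
    W ∈ IntermediateField.adjoin F
      ((Set.range fun k : Fin n => algebraMap (MvPolynomial ι F) L (esymm ι F (k + 1))) ∪ T) ↔
      ∀ σ : Equiv.Perm ι, (∀ V ∈ T, σ • V = V) → σ • W = W := by
  have := IsFractionRing.smulCommClass (Equiv.Perm ι) F (MvPolynomial ι F) F L
  have := IsFractionRing.faithfulSMul (Equiv.Perm ι) (MvPolynomial ι F) L
  have hsymm : FixedPoints.intermediateField (Equiv.Perm ι) = IntermediateField.adjoin F
      (Set.range fun k : Fin n => algebraMap (MvPolynomial ι F) L (esymm ι F (k + 1))) := by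
    rw [fixedPoints_eq_adjoin_image_of_isFractionRing (fixedPoints_perm_eq_adjoin_esymm hn),
      ← Set.range_comp]
    rfl
  rw [IntermediateField.adjoin_union, ← hsymm, ← fixedPoints_fixingSubgroup_eq_sup_adjoin]
  simp only [FixedPoints.mem_intermediateField_iff, Subtype.forall, mem_fixingSubgroup_iff,
    Subgroup.mk_smul]

end Symmetric

/-- If a rational function `V` is not fixed by any nontrivial permutation of the
variables, then every rational function of `x₁, …, xₙ` is a rational function of the
elementary symmetric polynomials and `V`: `F(x₁,…,xₙ) = F(σ₁,…,σₙ,V)`. -/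
theorem stmt_13 (F : Type*) [Field F] (n : ℕ)
    (V : FractionRing (MvPolynomial (Fin n) F))
    (hV : ∀ σ : Equiv.Perm (Fin n), permAct F n σ V = V → σ = 1) :
    IntermediateField.adjoin F
      ((Set.range fun k : Fin n =>
          algebraMap (MvPolynomial (Fin n) F) (FractionRing (MvPolynomial (Fin n) F))
            (esymm (Fin n) F ((k : ℕ) + 1))) ∪ {V}) = ⊤ := by
  let := permMulSemiringAction (Fin n) F
  let := IsFractionRing.mulSemiringAction (Equiv.Perm (Fin n)) (MvPolynomial (Fin n) F)
    (FractionRing (MvPolynomial (Fin n) F))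
  exact eq_top_iff.2 fun W _ => (stmt_13_general (Fintype.card_fin n).le {V} W).2 fun σ hσ =>
    hV σ (hσ V rfl) ▸ one_smul _ W
end
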